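/- arXiv:1605.00346 — 2 statements merged into one kernel-verified Lean document; each statement's English description precedes it below -/
import Mathlib

section
/- Let x_1, …, x_{N_1+N_2} ∈ ℝ^D be arbitrary, viewed as two segments {x_n : n = 1, …, N_1} and {x_n : n = N_1+1, …, N_1+N_2}, and let 0 < t < N_1. Consider shifting the change point from N_1 to N_1 − t, so that the two segments become {x_n : n = 1, …, N_1 − t} and {x_n : n = N_1 − t + 1, …, N_1 + N_2}. Then the total within-segment quadratic loss is strictly reduced by this operation if and only if N_1 |x̄_{0,N_1} − x̄_{N_1−t,N_1}|² / (N_1 − t) > N_2 |x̄_{N_1,N_1+N_2} − x̄_{N_1−t,N_1}|² / (N_2 + t), where x̄_{n_1,n_2} denotes the sample mean of x_{n_1+1}, …, x_{n_2}. -/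
open MeasureTheory ProbabilityTheory Filter Finset

noncomputable section

/-- Sample mean of the block `x_{a+1}, …, x_b`. -/
def sampleMean {D : ℕ} (x : ℕ → EuclideanSpace ℝ (Fin D)) (a b : ℕ) :
    EuclideanSpace ℝ (Fin D) :=
  ((b - a : ℕ) : ℝ)⁻¹ • ∑ n ∈ Finset.Ioc a b, x n

/-- Within-segment quadratic loss of the block `x_{a+1}, …, x_b`. -/
def lossQ {D : ℕ} (x : ℕ → EuclideanSpace ℝ (Fin D)) (a b : ℕ) : ℝ :=
  ∑ n ∈ Finset.Ioc a b, ‖x n - sampleMean x a b‖ ^ 2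


/-!
By the parallel axis theorem, merging two clusters of masses `p` and `q` increases the quadratic
loss by `p q / (p + q)` times the squared distance between their means. Shifting the change point
detaches a middle block `B` from its left neighbour `A` and merges it with its right neighbour `C`.
The loss saved by the first operation and the loss incurred by the second both carry the factor
`∑ i ∈ B, w i`, and dividing by it gives the criterion; on the left, the distance between the means
of `A` and `B` is rescaled to the distance between the means of `A ∪ B` and `B`.
-/

section WeightedLoss

variable {ι E : Type*} [NormedAddCommGroup E] [InnerProductSpace ℝ E]
  {s t : Finset ι} {w : ι → ℝ} {x : ι → E}

/-- Within-cluster quadratic loss of the points `x i`, `i ∈ s`, carrying the masses `w i`: their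
moment of inertia about their centre of mass. Unit masses give the within-segment loss. -/
def weightedLoss (s : Finset ι) (w : ι → ℝ) (x : ι → E) : ℝ :=
  ∑ i ∈ s, w i * ‖x i - s.centerMass w x‖ ^ 2

theorem sum_smul_sub_centerMass (hs : ∑ i ∈ s, w i ≠ 0) :
    ∑ i ∈ s, w i • (x i - s.centerMass w x) = 0 := by
  simp only [smul_sub, sum_sub_distrib, ← sum_smul]
  rw [centerMass, smul_inv_smul₀ hs, sub_self]

theorem sum_mul_norm_sub_sq (hs : ∑ i ∈ s, w i ≠ 0) (c : E) :
    ∑ i ∈ s, w i * ‖x i - c‖ ^ 2 =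
      weightedLoss s w x + (∑ i ∈ s, w i) * ‖s.centerMass w x - c‖ ^ 2 := by
  set μ := s.centerMass w x with hμ
  have cross_term : ∑ i ∈ s, w i * inner ℝ (x i - μ) (μ - c) = 0 := by
    simp only [← real_inner_smul_left, ← sum_inner, hμ, sum_smul_sub_centerMass hs,
      inner_zero_left]
  calc ∑ i ∈ s, w i * ‖x i - c‖ ^ 2
      = ∑ i ∈ s, (w i * ‖x i - μ‖ ^ 2 + 2 * (w i * inner ℝ (x i - μ) (μ - c))
          + w i * ‖μ - c‖ ^ 2) := by
        refine sum_congr rfl fun i _ ↦ ?_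
        rw [← sub_add_sub_cancel (x i) μ c, norm_add_sq_real]
        ring
    _ = weightedLoss s w x + (∑ i ∈ s, w i) * ‖μ - c‖ ^ 2 := by
        rw [sum_add_distrib, sum_add_distrib, ← mul_sum, cross_term, ← sum_mul, mul_zero, add_zero,
          weightedLoss]

variable [DecidableEq ι]

theorem centerMass_union_sub_centerMass_right (hst : Disjoint s t) (hs : ∑ i ∈ s, w i ≠ 0)
    (ht : ∑ i ∈ t, w i ≠ 0) (hadd : ∑ i ∈ s, w i + ∑ i ∈ t, w i ≠ 0) :
    (s ∪ t).centerMass w x - t.centerMass w x =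
      ((∑ i ∈ s, w i) / (∑ i ∈ s, w i + ∑ i ∈ t, w i)) •
        (s.centerMass w x - t.centerMass w x) := by
  simp only [centerMass, sum_union hst]
  match_scalars <;> field_simp
  ring

theorem norm_centerMass_union_sub_centerMass_right_sq (hst : Disjoint s t)
    (hs : ∑ i ∈ s, w i ≠ 0) (ht : ∑ i ∈ t, w i ≠ 0)
    (hadd : ∑ i ∈ s, w i + ∑ i ∈ t, w i ≠ 0) :
    ‖(s ∪ t).centerMass w x - t.centerMass w x‖ ^ 2 =
      ((∑ i ∈ s, w i) / (∑ i ∈ s, w i + ∑ i ∈ t, w i)) ^ 2 *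
        ‖s.centerMass w x - t.centerMass w x‖ ^ 2 := by
  rw [centerMass_union_sub_centerMass_right hst hs ht hadd, norm_smul, mul_pow, Real.norm_eq_abs,
    sq_abs]

theorem weightedLoss_union (hst : Disjoint s t) (hs : ∑ i ∈ s, w i ≠ 0) (ht : ∑ i ∈ t, w i ≠ 0)
    (hadd : ∑ i ∈ s, w i + ∑ i ∈ t, w i ≠ 0) :
    weightedLoss (s ∪ t) w x = weightedLoss s w x + weightedLoss t w x +
      (∑ i ∈ s, w i) * (∑ i ∈ t, w i) / (∑ i ∈ s, w i + ∑ i ∈ t, w i) *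
        ‖s.centerMass w x - t.centerMass w x‖ ^ 2 := by
  have dist_right :=
    norm_centerMass_union_sub_centerMass_right_sq (x := x) hst hs ht hadd
  have dist_left :=
    norm_centerMass_union_sub_centerMass_right_sq (x := x) hst.symm ht hs (by rwa [add_comm])
  rw [union_comm t s, add_comm (∑ i ∈ t, w i), norm_sub_rev (t.centerMass w x)] at dist_left
  rw [weightedLoss, sum_union hst, sum_mul_norm_sub_sq hs, sum_mul_norm_sub_sq ht,
    norm_sub_rev (s.centerMass w x), norm_sub_rev (t.centerMass w x), dist_left, dist_right]
  field_simp
  ring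

theorem weightedLoss_union_eq_add_centerMass_union (hst : Disjoint s t) (hs : ∑ i ∈ s, w i ≠ 0)
    (ht : ∑ i ∈ t, w i ≠ 0) (hadd : ∑ i ∈ s, w i + ∑ i ∈ t, w i ≠ 0) :
    weightedLoss (s ∪ t) w x = weightedLoss s w x + weightedLoss t w x +
      (∑ i ∈ t, w i) * ((∑ i ∈ s ∪ t, w i) *
        ‖(s ∪ t).centerMass w x - t.centerMass w x‖ ^ 2 / ∑ i ∈ s, w i) := by
  rw [weightedLoss_union hst hs ht hadd, sum_union hst,
    norm_centerMass_union_sub_centerMass_right_sq hst hs ht hadd]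
  field_simp

theorem shift_reduces_loss_iff_general {A B C : Finset ι} (hAB : Disjoint A B)
    (hBC : Disjoint B C) (hA : 0 < ∑ i ∈ A, w i) (hB : 0 < ∑ i ∈ B, w i)
    (hC : 0 < ∑ i ∈ C, w i) :
    weightedLoss A w x + weightedLoss (B ∪ C) w x <
        weightedLoss (A ∪ B) w x + weightedLoss C w x ↔
      (∑ i ∈ C, w i) * ‖C.centerMass w x - B.centerMass w x‖ ^ 2 /
          (∑ i ∈ C, w i + ∑ i ∈ B, w i) <
        (∑ i ∈ A ∪ B, w i) * ‖(A ∪ B).centerMass w x - B.centerMass w x‖ ^ 2 /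
          ∑ i ∈ A, w i := by
  have gain : weightedLoss (A ∪ B) w x + weightedLoss C w x -
        (weightedLoss A w x + weightedLoss (B ∪ C) w x) =
      (∑ i ∈ B, w i) * ((∑ i ∈ A ∪ B, w i) *
          ‖(A ∪ B).centerMass w x - B.centerMass w x‖ ^ 2 / ∑ i ∈ A, w i -
        (∑ i ∈ C, w i) * ‖C.centerMass w x - B.centerMass w x‖ ^ 2 /
          (∑ i ∈ C, w i + ∑ i ∈ B, w i)) := by
    rw [weightedLoss_union_eq_add_centerMass_union hAB hA.ne' hB.ne' (add_pos hA hB).ne',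
      union_comm B C, weightedLoss_union hBC.symm hC.ne' hB.ne' (add_pos hC hB).ne']
    ring
  rw [← sub_pos, gain, mul_pos_iff_of_pos_left hB, sub_pos]

end WeightedLoss

section Segments

variable {D : ℕ} (x : ℕ → EuclideanSpace ℝ (Fin D)) (a b : ℕ)

theorem sampleMean_eq_centerMass : sampleMean x a b = (Ioc a b).centerMass (1 : ℕ → ℝ) x := by
  simp [sampleMean, centerMass]

theorem lossQ_eq_weightedLoss : lossQ x a b = weightedLoss (Ioc a b) 1 x := by
  simp [lossQ, weightedLoss, sampleMean_eq_centerMass]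

end Segments

/-- **Proposition (change-point shift).**
Let `x_1, …, x_{N₁+N₂} ∈ ℝ^D` form two segments `(0, N₁]` and `(N₁, N₁+N₂]`, and let
`0 < t < N₁`.  Shifting the change point from `N₁` to `N₁ − t` strictly reduces the total
within-segment quadratic loss if and only if
`N₁ |x̄_{0,N₁} − x̄_{N₁−t,N₁}|² / (N₁ − t) > N₂ |x̄_{N₁,N₁+N₂} − x̄_{N₁−t,N₁}|² / (N₂ + t)`. -/
theorem shift_reduces_loss_iff {D : ℕ} (x : ℕ → EuclideanSpace ℝ (Fin D))
    (N₁ N₂ t : ℕ) (ht : 0 < t) (htN : t < N₁) (hN₂ : 0 < N₂) :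
    lossQ x 0 (N₁ - t) + lossQ x (N₁ - t) (N₁ + N₂) <
        lossQ x 0 N₁ + lossQ x N₁ (N₁ + N₂) ↔
      (N₂ : ℝ) * ‖sampleMean x N₁ (N₁ + N₂) - sampleMean x (N₁ - t) N₁‖ ^ 2 /
          ((N₂ : ℝ) + t) <
        (N₁ : ℝ) * ‖sampleMean x 0 N₁ - sampleMean x (N₁ - t) N₁‖ ^ 2 /
          ((N₁ : ℝ) - t) := by
  simpa [lossQ_eq_weightedLoss, sampleMean_eq_centerMass, htN.le, Nat.sub_sub_self,
    Ioc_union_Ioc_eq_Ioc] using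
    shift_reduces_loss_iff_general (x := x) (w := 1)
      (Ioc_disjoint_Ioc_of_le (a := 0) (d := N₁) (le_refl (N₁ - t)))
      (Ioc_disjoint_Ioc_of_le (d := N₁ + N₂) le_rfl)
      (by simpa using htN) (by simpa [htN.le] using ht) (by simpa using hN₂)
end
end

section
/- For all integers n_1, n_2 with n_2 ≥ n_1 ≥ 34, it holds that (n_1 / (n_1 + n_2)) · log log n_2 ≤ (1/2) · log log n_1, where log denotes the natural logarithm. -/
/-!
On `(1, ∞)` the function `log ∘ log` lies below its tangent at `a`, whose slope is
`1 / (a * log a)`. The claim compares it on `[a, ∞)` with the line through `(a, log (log a))` of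
slope `log (log a) / (2 * a)`, so it holds as soon as that slope is at least the tangent slope,
that is `2 ≤ log a * log (log a)`.
-/

open Real

theorem log_sub_log_le_sub_div {x y : ℝ} (hx : 0 < x) (hy : 0 < y) :
    log y - log x ≤ (y - x) / x := by
  rw [← log_div hy.ne' hx.ne', sub_div, div_self hx.ne']
  exact log_le_sub_one_of_pos (div_pos hy hx)

theorem log_log_sub_log_log_le {x y : ℝ} (hx : 1 < x) (hy : 1 < y) :
    log (log y) - log (log x) ≤ (y - x) / (x * log x) := by
  have hlog : 0 < log x := log_pos hx
  calc log (log y) - log (log x)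
      ≤ (log y - log x) / log x := log_sub_log_le_sub_div hlog (log_pos hy)
    _ ≤ (y - x) / x / log x := by
        gcongr
        exact log_sub_log_le_sub_div (by positivity) (by positivity)
    _ = (y - x) / (x * log x) := div_div _ _ _

theorem natCast_div_le_log_iff {x : ℝ} (hx : 0 < x) (m : ℕ) {n : ℕ} (hn : n ≠ 0) :
    (m / n : ℝ) ≤ log x ↔ exp 1 ^ m ≤ x ^ n := by
  have hn' : (0 : ℝ) < n := by positivity
  rw [div_le_iff₀' hn', ← log_pow, le_log_iff_exp_le (pow_pos hx n), exp_one_pow]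

/-- The threshold `11` is the least possible integer, since `log 10 * log (log 10) < 2`. -/
theorem two_le_log_mul_log_log {x : ℝ} (hx : 11 ≤ x) : 2 ≤ log x * log (log x) := by
  have exp_one_le : exp 1 ≤ 2.7182818286 := exp_one_lt_d9.le
  have log_ge : 19 / 8 ≤ log x := by
    refine mod_cast (natCast_div_le_log_iff (by positivity) 19 (n := 8) (by norm_num)).2 ?_
    calc exp 1 ^ 19 ≤ 2.7182818286 ^ 19 := by gcongr
      _ ≤ 11 ^ 8 := by norm_num
      _ ≤ x ^ 8 := by gcongr
  have log_log_ge : 6 / 7 ≤ log (log x) := by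
    refine mod_cast (natCast_div_le_log_iff (by positivity) 6 (n := 7) (by norm_num)).2 ?_
    calc exp 1 ^ 6 ≤ 2.7182818286 ^ 6 := by gcongr
      _ ≤ (19 / 8) ^ 7 := by norm_num
      _ ≤ log x ^ 7 := by gcongr
  calc (2 : ℝ) ≤ 19 / 8 * (6 / 7) := by norm_num
    _ ≤ log x * log (log x) := by gcongr

theorem loglog_ratio_ineq_general {a b : ℝ} (ha : 1 < a) (hab : a ≤ b)
    (hlog : 2 ≤ log a * log (log a)) :
    a / (a + b) * log (log b) ≤ 1 / 2 * log (log a) := by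
  have ha₀ : 0 < a := by positivity
  have hb₀ : 0 < b := ha₀.trans_le hab
  have hla : 0 < log a := log_pos ha
  have slope_le : 1 / (a * log a) ≤ log (log a) / (2 * a) := by
    rw [div_le_div_iff₀ (by positivity) (by positivity)]
    linear_combination a * hlog
  have log_log_le : log (log b) ≤ (a + b) / (2 * a) * log (log a) :=
    calc log (log b)
        ≤ log (log a) + (b - a) / (a * log a) :=
          sub_le_iff_le_add'.1 (log_log_sub_log_log_le ha (ha.trans_le hab))
      _ = log (log a) + (b - a) * (1 / (a * log a)) := by rw [mul_one_div]
      _ ≤ log (log a) + (b - a) * (log (log a) / (2 * a)) := by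
          gcongr
      _ = (a + b) / (2 * a) * log (log a) := by field_simp; ring
  calc a / (a + b) * log (log b)
      ≤ a / (a + b) * ((a + b) / (2 * a) * log (log a)) := by gcongr
    _ = 1 / 2 * log (log a) := by field_simp

/-- **Lemma (iterated-logarithm inequality).**
For all integers `n₁, n₂` with `n₂ ≥ n₁ ≥ 34`,
`(n₁ / (n₁ + n₂)) · log log n₂ ≤ (1/2) · log log n₁`. -/
theorem loglog_ratio_ineq (n₁ n₂ : ℕ) (h₁ : 34 ≤ n₁) (h₂ : n₁ ≤ n₂) :
    ((n₁ : ℝ) / (n₁ + n₂)) * Real.log (Real.log n₂) ≤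
      (1 / 2 : ℝ) * Real.log (Real.log n₁) := by
  have ha : (34 : ℝ) ≤ n₁ := mod_cast h₁
  exact loglog_ratio_ineq_general (by linarith) (mod_cast h₂) (two_le_log_mul_log_log (by linarith))
end
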